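/- arXiv:2407.00687 — 4 statements merged into one kernel-verified Lean document; each statement's English description precedes it below -/
import Mathlib

section
/- Assume Ag contains at least two distinct agents a and b. Then the scheme C_Gφ → F_Gφ is not valid on similarity models: there exist a formula φ (e.g., a propositional variable p), a group G = {a,b}, a similarity model M and a state s of M such that M,s ⊨ C_Gφ but M,s ⊭ F_Gφ. -/
/-- Formulas of the language ELCDF over a set `Ag` of agents, with propositional
variables drawn from the countably infinite set `ℕ`.  Groups are nonempty
finite sets of agents. -/
inductive Formula (Ag : Type) : Type
  | atom : ℕ → Formula Ag
  | neg  : Formula Ag → Formula Ag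
  | impl : Formula Ag → Formula Ag → Formula Ag
  | K    : Ag → Formula Ag → Formula Ag
  | C    : (G : Finset Ag) → G.Nonempty → Formula Ag → Formula Ag
  | D    : (G : Finset Ag) → G.Nonempty → Formula Ag → Formula Ag
  | F    : (G : Finset Ag) → G.Nonempty → Formula Ag → Formula Ag

/-- A similarity model `(W, A, E, C, ν)`. -/
structure SimModel (Ag : Type) where
  W : Type
  A : Type
  w_nonempty : Nonempty W
  E : W → W → Set A
  Cap : Ag → Set A
  val : W → Set ℕ
  positivity : ∀ s t : W, E s t = Set.univ → s = t
  symmetry : ∀ s t : W, E s t = E t s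

/-- Satisfaction on similarity models.  The clause for common knowledge
`C_G ψ` ("`E_G^n ψ` holds for every positive integer `n`") is rendered as:
`ψ` holds at every state reachable from `s` by a nonempty finite chain of
`G`-edges (a step from `u` to `v` being possible when `C(a) ⊆ E(u,v)` for
some `a ∈ G`), which is exactly the same condition. -/
def SimModel.sat {Ag : Type} (M : SimModel Ag) : M.W → Formula Ag → Prop
  | s, .atom p => p ∈ M.val s
  | s, .neg φ => ¬ M.sat s φ
  | s, .impl φ ψ => M.sat s φ → M.sat s ψ
  | s, .K a φ => ∀ t, M.Cap a ⊆ M.E s t → M.sat t φ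
  | s, .C G _ φ =>
      ∀ t, Relation.TransGen (fun u v => ∃ a ∈ G, M.Cap a ⊆ M.E u v) s t → M.sat t φ
  | s, .D G _ φ => ∀ t, (⋃ a ∈ G, M.Cap a) ⊆ M.E s t → M.sat t φ
  | s, .F G _ φ => ∀ t, (⋂ a ∈ G, M.Cap a) ⊆ M.E s t → M.sat t φ

/-- Validity on similarity models. -/
def Valid {Ag : Type} (φ : Formula Ag) : Prop :=
  ∀ (M : SimModel Ag) (s : M.W), M.sat s φ

/-- if `Ag` contains two distinct agents `a` and `b`, then the
scheme `C_Gφ → F_Gφ` is not valid: for `G = {a,b}` there are a formula `φ`, a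
similarity model `M` and a state `s` with `M,s ⊨ C_Gφ` but `M,s ⊭ F_Gφ`. -/
theorem stmt_10 {Ag : Type} [Fintype Ag] [Nonempty Ag] [DecidableEq Ag]
    (a b : Ag) (hab : a ≠ b) :
    ∃ (φ : Formula Ag) (M : SimModel Ag) (s : M.W),
      M.sat s (Formula.C {a, b} (Finset.insert_nonempty a {b}) φ) ∧
      ¬ M.sat s (Formula.F {a, b} (Finset.insert_nonempty a {b}) φ) := by
  classical
  refine ⟨.atom 0,
    { W := Bool, A := Bool, w_nonempty := ⟨true⟩,
      E := fun s t => {_x | s = t},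
      Cap := fun x => {y | y = decide (x = a)},
      val := fun s => {_n | s = true},
      positivity := ?_, symmetry := ?_ }, true, ?_, ?_⟩
  · intro s t h
    have : true ∈ {_x : Bool | s = t} := by rw [h]; trivial
    exact this
  · intro s t
    ext x
    exact eq_comm
  · intro t h
    change t = true
    induction h with
    | single h =>
      obtain ⟨c, _, hc⟩ := h
      exact (hc (show decide (c = a) = decide (c = a) from rfl)).symm
    | tail _ h ih =>
      obtain ⟨c, _, hc⟩ := h
      exact (hc (show decide (c = a) = decide (c = a) from rfl)).symm.trans ih
  · intro h
    have h2 : (false : Bool) = true := by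
      refine h false ?_
      intro x hx
      have h1 := Set.mem_iInter₂.1 hx a (by simp)
      have h2 := Set.mem_iInter₂.1 hx b (by simp)
      change x = decide (a = a) at h1
      change x = decide (b = a) at h2
      simp [hab.symm] at h1 h2
      simp [h1] at h2
    cases h2
end

section
/- Assume Ag contains at least two distinct agents a and b. Then the scheme D_Gφ → K_aφ with a ∈ G is not valid on similarity models: there exist a formula φ, a group G = {a,b}, a similarity model M and a state s of M such that M,s ⊨ D_Gφ but M,s ⊭ K_aφ. -/
/-- if `Ag` contains two distinct agents `a` and `b`, then the
scheme `D_Gφ → K_aφ` (with `a ∈ G`) is not valid: for `G = {a,b}` there are a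
formula `φ`, a similarity model `M` and a state `s` with `M,s ⊨ D_Gφ` but
`M,s ⊭ K_aφ`. -/
theorem stmt_11 {Ag : Type} [Fintype Ag] [Nonempty Ag] [DecidableEq Ag]
    (a b : Ag) (hab : a ≠ b) :
    ∃ (φ : Formula Ag) (M : SimModel Ag) (s : M.W),
      M.sat s (Formula.D {a, b} (Finset.insert_nonempty a {b}) φ) ∧
      ¬ M.sat s (Formula.K a φ) := by
  refine ⟨.atom 0,
    { W := Bool, A := Unit, w_nonempty := ⟨true⟩
      E := fun s t => {_x | s = t}
      Cap := fun c => {_x | c = b}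
      val := fun w => {_n | w = true}
      positivity := fun s t h => by
        have h1 : () ∈ ({_x | s = t} : Set Unit) := by rw [h]; trivial
        exact h1
      symmetry := fun s t => by ext x; exact eq_comm }, true, ?_, ?_⟩
  · simp only [SimModel.sat]
    intro t ht
    have h1 := @ht () (Set.mem_biUnion (x := b) (by simp) rfl)
    exact (Eq.symm h1 : t = true)
  · simp only [SimModel.sat]
    intro h
    have h1 : false = true := h false (fun x hx => absurd hx hab)
    exact Bool.noConfusion h1
end

section
/- Soundness of ELCDF: every formula derivable in the axiomatic system ELCDF is valid on similarity models, i.e., if ⊢_ELCDF φ then M,s ⊨ φ for every similarity model M and every state s of M. -/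
namespace Formula
/-- Conjunction, defined from the primitive connectives. -/
def and {Ag : Type} (φ ψ : Formula Ag) : Formula Ag := .neg (φ.impl ψ.neg)
/-- A fixed tautology. -/
def top {Ag : Type} : Formula Ag := (atom 0).impl (atom 0)
/-- Biconditional, defined from the primitive connectives. -/
def iff {Ag : Type} (φ ψ : Formula Ag) : Formula Ag := (φ.impl ψ).and (ψ.impl φ)
end Formula

/-- The conjunction `⋀_{a ∈ G} f a`. -/
noncomputable def bigConj {Ag : Type} (G : Finset Ag) (f : Ag → Formula Ag) : Formula Ag :=
  (G.toList.map f).foldr Formula.and Formula.top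

/-- `φ` is a propositional tautology: it evaluates to `true` under every
assignment of truth values to formulas that respects negation and implication
(thereby treating atoms and modal formulas as propositional atoms). -/
def IsTautology {Ag : Type} (φ : Formula Ag) : Prop :=
  ∀ v : Formula Ag → Bool,
    (∀ ψ : Formula Ag, v ψ.neg = !v ψ) →
    (∀ ψ χ : Formula Ag, v (ψ.impl χ) = (!v ψ || v χ)) →
    v φ = true

/-- The axiomatic system ELCDF: the least set of formulas containing all
propositional tautologies, closed under modus ponens and necessitation for
each `K_a`, and containing the axiom schemes K, B, C1 (with the rule C2),
KD, D1, D2, BD, KF, F1, F2, BF, and closed under the rule NF. -/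
inductive Prov {Ag : Type} : Formula Ag → Prop
  | taut {φ : Formula Ag} : IsTautology φ → Prov φ
  | mp {φ ψ : Formula Ag} : Prov (φ.impl ψ) → Prov φ → Prov ψ
  | nec {φ : Formula Ag} (a : Ag) : Prov φ → Prov (.K a φ)
  | kK {φ ψ : Formula Ag} (a : Ag) :
      Prov ((Formula.K a (φ.impl ψ)).impl ((Formula.K a φ).impl (.K a ψ)))
  | axB {φ : Formula Ag} (a : Ag) :
      Prov (φ.impl (.K a (Formula.neg (.K a φ.neg))))
  | c1 {φ : Formula Ag} (G : Finset Ag) (hG : G.Nonempty) :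
      Prov ((Formula.C G hG φ).impl
        (bigConj G fun a => .K a (φ.and (.C G hG φ))))
  | c2 {φ ψ : Formula Ag} (G : Finset Ag) (hG : G.Nonempty) :
      Prov (φ.impl (bigConj G fun a => .K a (φ.and ψ))) →
      Prov (φ.impl (.C G hG ψ))
  | kD {φ ψ : Formula Ag} (G : Finset Ag) (hG : G.Nonempty) :
      Prov ((Formula.D G hG (φ.impl ψ)).impl ((Formula.D G hG φ).impl (.D G hG ψ)))
  | d1 {φ : Formula Ag} (a : Ag) :
      Prov ((Formula.D {a} (Finset.singleton_nonempty a) φ).iff (.K a φ))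
  | d2 {φ : Formula Ag} (G H : Finset Ag) (hG : G.Nonempty) (hH : H.Nonempty)
      (hGH : G ⊆ H) : Prov ((Formula.D G hG φ).impl (.D H hH φ))
  | bd {φ : Formula Ag} (G : Finset Ag) (hG : G.Nonempty) :
      Prov (φ.impl (.D G hG (Formula.neg (.D G hG φ.neg))))
  | kF {φ ψ : Formula Ag} (G : Finset Ag) (hG : G.Nonempty) :
      Prov ((Formula.F G hG (φ.impl ψ)).impl ((Formula.F G hG φ).impl (.F G hG ψ)))
  | f1 {φ : Formula Ag} (a : Ag) :
      Prov ((Formula.F {a} (Finset.singleton_nonempty a) φ).iff (.K a φ))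
  | f2 {φ : Formula Ag} (G H : Finset Ag) (hG : G.Nonempty) (hH : H.Nonempty)
      (hHG : H ⊆ G) : Prov ((Formula.F G hG φ).impl (.F H hH φ))
  | bf {φ : Formula Ag} (G : Finset Ag) (hG : G.Nonempty) :
      Prov (φ.impl (.F G hG (Formula.neg (.F G hG φ.neg))))
  | nf {φ : Formula Ag} (G : Finset Ag) (hG : G.Nonempty) :
      Prov φ → Prov (.F G hG φ)

theorem sat_and {Ag : Type} (M : SimModel Ag) (s : M.W) (φ ψ : Formula Ag) :
    M.sat s (φ.and ψ) ↔ M.sat s φ ∧ M.sat s ψ := by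
  simp only [Formula.and, SimModel.sat]
  tauto

theorem sat_iff {Ag : Type} (M : SimModel Ag) (s : M.W) (φ ψ : Formula Ag) :
    M.sat s (φ.iff ψ) ↔ (M.sat s φ ↔ M.sat s ψ) := by
  simp only [Formula.iff, sat_and, SimModel.sat]
  tauto

theorem sat_bigConj {Ag : Type} (M : SimModel Ag) (s : M.W) (G : Finset Ag)
    (f : Ag → Formula Ag) :
    M.sat s (bigConj G f) ↔ ∀ a ∈ G, M.sat s (f a) := by
  have key : ∀ l : List Ag, M.sat s ((l.map f).foldr Formula.and Formula.top) ↔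
      ∀ a ∈ l, M.sat s (f a) := by
    intro l
    induction l with
    | nil => simp [Formula.top, SimModel.sat]
    | cons b l ih => simp [sat_and, ih]
  simpa [bigConj] using key G.toList

/-- soundness of ELCDF: every theorem of the axiomatic system
ELCDF is valid on similarity models. -/
theorem stmt_14 {Ag : Type} [Fintype Ag] [Nonempty Ag]
    (φ : Formula Ag) (h : Prov φ) :
    ∀ (M : SimModel Ag) (s : M.W), M.sat s φ := by
  intro M
  induction h with
  | taut h =>
    intro s
    classical
    have := h (fun ψ => decide (M.sat s ψ)) (by intro ψ; by_cases hh : M.sat s ψ <;> simp [SimModel.sat, hh])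
      (by intro ψ χ; simp [SimModel.sat, imp_iff_not_or])
    simpa using this
  | mp _ _ ih1 ih2 =>
    intro s
    have := ih1 s
    simp only [SimModel.sat] at this
    exact this (ih2 s)
  | nec a _ ih =>
    intro s
    simp only [SimModel.sat]
    exact fun t _ => ih t
  | kK a =>
    intro s
    simp only [SimModel.sat]
    exact fun h1 h2 t ht => h1 t ht (h2 t ht)
  | axB a =>
    intro s
    simp only [SimModel.sat]
    exact fun h t ht h2 => h2 s (M.symmetry s t ▸ ht) h
  | c1 G hG =>
    intro s
    simp only [SimModel.sat, sat_bigConj, sat_and]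
    exact fun h a ha t ht => ⟨h t (.single ⟨a, ha, ht⟩),
      fun u hu => h u (.head ⟨a, ha, ht⟩ hu)⟩
  | c2 G hG _ ih =>
    intro s
    simp only [SimModel.sat, sat_bigConj, sat_and] at ih ⊢
    intro h t ht
    have := fun u (hu : Relation.TransGen
        (fun u v => ∃ a ∈ G, M.Cap a ⊆ M.E u v) s u) => by
      induction hu with
      | single hu =>
        obtain ⟨a, ha, hu⟩ := hu
        exact ih s h a ha _ hu
      | tail _ hu ih2 =>
        obtain ⟨a, ha, hu⟩ := hu
        exact ih _ ih2.1 a ha _ hu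
    exact (this t ht).2
  | kD G hG =>
    intro s
    simp only [SimModel.sat]
    exact fun h1 h2 t ht => h1 t ht (h2 t ht)
  | d1 a =>
    intro s
    simp [sat_iff, SimModel.sat]
  | d2 G H hG hH hGH =>
    intro s
    simp only [SimModel.sat]
    exact fun h t ht => h t ((Set.biUnion_subset_biUnion_left hGH).trans ht)
  | bd G hG =>
    intro s
    simp only [SimModel.sat]
    exact fun h t ht h2 => h2 s (M.symmetry s t ▸ ht) h
  | kF G hG =>
    intro s
    simp only [SimModel.sat]
    exact fun h1 h2 t ht => h1 t ht (h2 t ht)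
  | f1 a =>
    intro s
    simp [sat_iff, SimModel.sat]
  | f2 G H hG hH hHG =>
    intro s
    simp only [SimModel.sat]
    exact fun h t ht => h t ((Set.biInter_subset_biInter_left hHG).trans ht)
  | bf G hG =>
    intro s
    simp only [SimModel.sat]
    exact fun h t ht h2 => h2 s (M.symmetry s t ▸ ht) h
  | nf G hG _ ih =>
    intro s
    simp only [SimModel.sat]
    exact fun t _ => ih t
end

section
/- Weak completeness of ELCDF: for every formula φ of the language ELCDF, if φ is valid on similarity models (satisfied at every state of every similarity model), then φ is a theorem of the axiomatic system ELCDF. -/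
namespace ELCDF

variable {Ag : Type}

structure IsTheory (T : Set (Formula Ag)) : Prop where
  prov : ∀ {φ}, Prov φ → φ ∈ T
  mp : ∀ {φ ψ}, Formula.impl φ ψ ∈ T → φ ∈ T → ψ ∈ T

structure IsMCS (T : Set (Formula Ag)) : Prop extends IsTheory T where
  neg : ∀ φ, Formula.neg φ ∈ T ↔ φ ∉ T

theorem IsMCS.impl {T : Set (Formula Ag)} (h : IsMCS T) (φ ψ : Formula Ag) :
    Formula.impl φ ψ ∈ T ↔ (φ ∈ T → ψ ∈ T) := by
  constructor
  · exact fun h1 h2 => h.mp h1 h2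
  · intro h1
    by_cases h2 : φ ∈ T
    · refine h.mp (h.prov (Prov.taut ?_)) (h1 h2)
      intro v hn hi
      simp only [hn, hi]
      cases v φ <;> cases v ψ <;> rfl
    · refine h.mp (h.prov (Prov.taut ?_)) ((h.neg φ).2 h2)
      intro v hn hi
      simp only [hn, hi]
      cases v φ <;> cases v ψ <;> rfl

theorem IsMCS.and {T : Set (Formula Ag)} (h : IsMCS T) (φ ψ : Formula Ag) :
    Formula.and φ ψ ∈ T ↔ (φ ∈ T ∧ ψ ∈ T) := by
  unfold Formula.and
  rw [h.neg, h.impl, h.neg]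
  tauto

theorem IsMCS.iff {T : Set (Formula Ag)} (h : IsMCS T) (φ ψ : Formula Ag) :
    Formula.iff φ ψ ∈ T ↔ (φ ∈ T ↔ ψ ∈ T) := by
  unfold Formula.iff
  rw [h.and, h.impl, h.impl]
  tauto

theorem IsMCS.top {T : Set (Formula Ag)} (h : IsMCS T) : Formula.top ∈ T := by
  unfold Formula.top
  rw [h.impl]
  exact id

theorem IsMCS.bigConj {T : Set (Formula Ag)} (h : IsMCS T) (G : Finset Ag)
    (f : Ag → Formula Ag) : bigConj G f ∈ T ↔ ∀ a ∈ G, f a ∈ T := by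
  have key : ∀ l : List Ag, (l.map f).foldr Formula.and Formula.top ∈ T ↔ ∀ a ∈ l, f a ∈ T := by
    intro l
    induction l with
    | nil => simp [h.top]
    | cons a l ih => simp [h.and, ih]
  unfold _root_.bigConj
  rw [key]
  simp

theorem lindenbaum {T : Set (Formula Ag)} (hT : IsTheory T) {φ : Formula Ag} (hφ : φ ∉ T) :
    ∃ M, IsMCS M ∧ T ⊆ M ∧ φ ∉ M := by
  obtain ⟨M, hTM, hM⟩ := zorn_subset_nonempty {S : Set (Formula Ag) | IsTheory S ∧ φ ∉ S}
    (by
      intro c hc hch hne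
      refine ⟨⋃₀ c, ⟨⟨?_, ?_⟩, ?_⟩, fun s hs => Set.subset_sUnion_of_mem hs⟩
      · intro ψ hψ
        obtain ⟨s, hs⟩ := hne
        exact ⟨s, hs, (hc hs).1.prov hψ⟩
      · rintro ψ χ ⟨s, hs, h1⟩ ⟨t, ht, h2⟩
        rcases hch.total hs ht with hst | hst
        · exact ⟨t, ht, (hc ht).1.mp (hst h1) h2⟩
        · exact ⟨s, hs, (hc hs).1.mp h1 (hst h2)⟩
      · rintro ⟨s, hs, h1⟩
        exact (hc hs).2 h1) T ⟨hT, hφ⟩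
  have hth : IsTheory M := hM.prop.1
  have hno : φ ∉ M := hM.prop.2
  have key : ∀ ψ, ψ ∉ M → Formula.impl ψ φ ∈ M := by
    intro ψ hψ
    by_contra hcon
    have h1 : {χ | Formula.impl ψ χ ∈ M} ∈ {S : Set (Formula Ag) | IsTheory S ∧ φ ∉ S} := by
      refine ⟨⟨?_, ?_⟩, hcon⟩
      · intro χ hχ
        refine hth.mp (hth.prov (Prov.taut ?_)) (hth.prov hχ)
        intro v hn hi
        simp only [hi]
        cases v χ <;> cases v ψ <;> rfl
      · intro α β h1 h2
        refine hth.mp (hth.mp (hth.prov (Prov.taut ?_)) h1) h2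
        intro v hn hi
        simp only [hi]
        cases v α <;> cases v β <;> cases v ψ <;> rfl
    have h2 : M ⊆ {χ | Formula.impl ψ χ ∈ M} := by
      intro χ hχ
      refine hth.mp (hth.prov (Prov.taut ?_)) hχ
      intro v hn hi
      simp only [hi]
      cases v χ <;> cases v ψ <;> rfl
    have h3 := hM.le_of_ge h1 h2
    apply hψ
    apply h3
    refine hth.prov (Prov.taut ?_)
    intro v hn hi
    simp only [hi]
    cases v ψ <;> rfl
  refine ⟨M, ⟨hth, ?_⟩, hTM, hno⟩
  intro ψ
  constructor
  · intro h1 h2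
    apply hno
    refine hth.mp (hth.mp (hth.prov (Prov.taut ?_)) h1) h2
    intro v hn hi
    simp only [hi, hn]
    cases v ψ <;> cases v φ <;> rfl
  · intro h1
    by_contra h2
    apply hno
    refine hth.mp (hth.mp (hth.prov (Prov.taut ?_)) (key _ h1)) (key _ h2)
    intro v hn hi
    simp only [hi, hn]
    cases v ψ <;> cases v φ <;> rfl

theorem isTheory_prov : IsTheory {φ : Formula Ag | Prov φ} :=
  ⟨fun h => h, fun h1 h2 => Prov.mp h1 h2⟩

abbrev MCS (Ag : Type) := {T : Set (Formula Ag) // IsMCS T}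

theorem prov_of_mcs {φ : Formula Ag} (h : ∀ Γ : MCS Ag, φ ∈ Γ.1) : Prov φ := by
  by_contra hc
  obtain ⟨M, hM, -, hn⟩ := lindenbaum isTheory_prov hc
  exact hn (h ⟨M, hM⟩)

/-- Labels of edges. -/
inductive Lab (Ag : Type) : Type
  | D : (G : Finset Ag) → G.Nonempty → Lab Ag
  | F : (G : Finset Ag) → G.Nonempty → Lab Ag

def Lab.box : Lab Ag → Formula Ag → Formula Ag
  | .D G hG => Formula.D G hG
  | .F G hG => Formula.F G hG

def Lab.fam : Lab Ag → Set (Finset Ag)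
  | .D G _ => {T | ∃ a ∈ G, a ∈ T}
  | .F G _ => {T | G ⊆ T}

theorem Lab.empty_notMem (l : Lab Ag) : ∅ ∉ l.fam := by
  cases l with
  | D G hG => simp [Lab.fam]
  | F G hG =>
    simp only [Lab.fam, Set.mem_setOf_eq, Finset.subset_empty]
    exact hG.ne_empty

theorem Lab.nec (l : Lab Ag) {φ : Formula Ag} (h : Prov φ) : Prov (l.box φ) := by
  cases l with
  | D G hG =>
    obtain ⟨a, ha⟩ := hG
    refine Prov.mp (Prov.d2 {a} G (Finset.singleton_nonempty a) _ (by simpa using ha)) ?_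
    apply prov_of_mcs
    intro Γ
    have := Γ.2.prov (Prov.d1 (φ := φ) a)
    rw [Γ.2.iff] at this
    exact this.2 (Γ.2.prov (Prov.nec a h))
  | F G hG => exact Prov.nf G hG h

theorem Lab.kax (l : Lab Ag) (φ ψ : Formula Ag) :
    Prov ((l.box (φ.impl ψ)).impl ((l.box φ).impl (l.box ψ))) := by
  cases l with
  | D G hG => exact Prov.kD G hG
  | F G hG => exact Prov.kF G hG

theorem Lab.bax (l : Lab Ag) (φ : Formula Ag) :
    Prov (φ.impl (l.box (Formula.neg (l.box φ.neg)))) := by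
  cases l with
  | D G hG => exact Prov.bd G hG
  | F G hG => exact Prov.bf G hG

theorem K_D (Γ : MCS Ag) (a : Ag) (χ : Formula Ag) :
    Formula.D {a} (Finset.singleton_nonempty a) χ ∈ Γ.1 ↔ Formula.K a χ ∈ Γ.1 := by
  rw [← Γ.2.iff]; exact Γ.2.prov (Prov.d1 a)

theorem K_F (Γ : MCS Ag) (a : Ag) (χ : Formula Ag) :
    Formula.F {a} (Finset.singleton_nonempty a) χ ∈ Γ.1 ↔ Formula.K a χ ∈ Γ.1 := by
  rw [← Γ.2.iff]; exact Γ.2.prov (Prov.f1 a)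

def Cap (a : Ag) : Set (Finset Ag) := {T | a ∈ T}

theorem incl_K {a : Ag} {l : Lab Ag} (h : Cap a ⊆ l.fam) (Γ : MCS Ag) {χ : Formula Ag}
    (hχ : Formula.K a χ ∈ Γ.1) : l.box χ ∈ Γ.1 := by
  have h1 : ({a} : Finset Ag) ∈ l.fam := h (by simp [Cap])
  cases l with
  | D G hG =>
    have ha : a ∈ G := by simpa [Lab.fam] using h1
    exact Γ.2.mp (Γ.2.prov (Prov.d2 {a} G (Finset.singleton_nonempty a) hG (by simpa using ha)))
      ((K_D Γ a χ).2 hχ)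
  | F G hG =>
    have hs : G ⊆ {a} := h1
    have he : G = {a} := (Finset.Nonempty.subset_singleton_iff hG).1 hs
    subst he
    exact (K_F Γ a χ).2 hχ

theorem incl_D {G : Finset Ag} (hG : G.Nonempty) {l : Lab Ag} (h : (⋃ a ∈ G, Cap a) ⊆ l.fam)
    (Γ : MCS Ag) {χ : Formula Ag} (hχ : Formula.D G hG χ ∈ Γ.1) : l.box χ ∈ Γ.1 := by
  have h1 : ∀ a ∈ G, ({a} : Finset Ag) ∈ l.fam := fun a ha => h (by
    simp only [Set.mem_iUnion]; exact ⟨a, ha, by simp [Cap]⟩)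
  cases l with
  | D H hH =>
    refine Γ.2.mp (Γ.2.prov (Prov.d2 G H hG hH ?_)) hχ
    intro a ha
    simpa [Lab.fam] using h1 a ha
  | F H hH =>
    have h2 : ∀ a ∈ G, H = {a} := fun a ha =>
      (Finset.Nonempty.subset_singleton_iff hH).1 (h1 a ha)
    obtain ⟨a, ha⟩ := id hG
    have hH' := h2 a ha
    have hG' : G = {a} := by
      ext b
      constructor
      · intro hb
        have := h2 b hb
        rw [hH'] at this
        simpa using (Finset.singleton_injective this).symm
      · intro hb
        rw [Finset.mem_singleton] at hb
        rwa [hb]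
    subst hH' hG'
    exact (K_F Γ a χ).2 ((K_D Γ a χ).1 hχ)

theorem incl_F {G : Finset Ag} (hG : G.Nonempty) {l : Lab Ag} (h : (⋂ a ∈ G, Cap a) ⊆ l.fam)
    (Γ : MCS Ag) {χ : Formula Ag} (hχ : Formula.F G hG χ ∈ Γ.1) : l.box χ ∈ Γ.1 := by
  have h1 : G ∈ l.fam := h (by simp [Cap])
  cases l with
  | D H hH =>
    obtain ⟨a, haH, haG⟩ := h1
    refine Γ.2.mp (Γ.2.prov (Prov.d2 {a} H (Finset.singleton_nonempty a) hH (by simpa using haH)))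
      ((K_D Γ a χ).2 ((K_F Γ a χ).1 ?_))
    exact Γ.2.mp (Γ.2.prov (Prov.f2 G {a} hG (Finset.singleton_nonempty a) (by simpa using haG))) hχ
  | F H hH => exact Γ.2.mp (Γ.2.prov (Prov.f2 G H hG hH h1)) hχ

/-- Canonical relation. -/
def Rc (l : Lab Ag) (Γ Δ : MCS Ag) : Prop := ∀ χ, l.box χ ∈ Γ.1 → χ ∈ Δ.1

theorem Rc_symm {l : Lab Ag} {Γ Δ : MCS Ag} (h : Rc l Γ Δ) : Rc l Δ Γ := by
  intro χ hχ
  by_contra hn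
  have h1 := h _ (Γ.2.mp (Γ.2.prov (l.bax χ.neg)) ((Γ.2.neg χ).2 hn))
  rw [Δ.2.neg] at h1
  apply h1
  refine Δ.2.mp (Δ.2.mp (Δ.2.prov (l.kax χ χ.neg.neg)) (Δ.2.prov (l.nec (Prov.taut ?_)))) hχ
  intro v hn hi
  simp only [hi, hn]
  cases v χ <;> rfl

theorem Rc_exists {l : Lab Ag} {Γ : MCS Ag} {χ : Formula Ag} (h : l.box χ ∉ Γ.1) :
    ∃ Δ, Rc l Γ Δ ∧ χ ∉ Δ.1 := by
  have hT : IsTheory {ψ | l.box ψ ∈ Γ.1} :=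
    ⟨fun hp => Γ.2.prov (l.nec hp), fun {φ ψ} h1 h2 =>
      Γ.2.mp (Γ.2.mp (Γ.2.prov (l.kax φ ψ)) h1) h2⟩
  obtain ⟨M, hM, hs, hn⟩ := lindenbaum hT (φ := χ) h
  exact ⟨⟨M, hM⟩, fun ψ hψ => hs hψ, hn⟩

/-- Agreement on a list of formulas. -/
def Agree (L : List (Formula Ag)) (Γ Δ : MCS Ag) : Prop := ∀ χ ∈ L, (χ ∈ Γ.1 ↔ χ ∈ Δ.1)

theorem Agree.refl (L : List (Formula Ag)) (Γ : MCS Ag) : Agree L Γ Γ := fun _ _ => Iff.rfl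
theorem Agree.symm {L : List (Formula Ag)} {Γ Δ : MCS Ag} (h : Agree L Γ Δ) : Agree L Δ Γ :=
  fun χ hχ => (h χ hχ).symm
theorem Agree.trans {L : List (Formula Ag)} {Γ Δ Θ : MCS Ag} (h : Agree L Γ Δ)
    (h' : Agree L Δ Θ) : Agree L Γ Θ :=
  fun χ hχ => (h χ hχ).trans (h' χ hχ)

theorem definable (L : List (Formula Ag)) : ∀ (P : MCS Ag → Prop),
    (∀ Γ Δ, Agree L Γ Δ → P Γ → P Δ) → ∃ χ : Formula Ag, ∀ Γ : MCS Ag, χ ∈ Γ.1 ↔ P Γ := by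
  induction L with
  | nil =>
    intro P hP
    by_cases h : ∃ Γ, P Γ
    · obtain ⟨Γ, hΓ⟩ := h
      exact ⟨Formula.top, fun Δ => ⟨fun _ => hP Γ Δ (by simp [Agree]) hΓ, fun _ => Δ.2.top⟩⟩
    · push Not at h
      refine ⟨Formula.neg Formula.top, fun Δ => ?_⟩
      rw [Δ.2.neg]
      exact ⟨fun h1 => absurd Δ.2.top h1, fun h1 => absurd h1 (h Δ)⟩
  | cons φ L ih =>
    intro P hP
    obtain ⟨χ₁, h₁⟩ := ih (fun Θ => ∃ Θ', Agree L Θ' Θ ∧ φ ∈ Θ'.1 ∧ P Θ')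
      (fun Γ Δ h ⟨Θ, h1, h2⟩ => ⟨Θ, h1.trans h, h2⟩)
    obtain ⟨χ₂, h₂⟩ := ih (fun Θ => ∃ Θ', Agree L Θ' Θ ∧ φ ∉ Θ'.1 ∧ P Θ')
      (fun Γ Δ h ⟨Θ, h1, h2⟩ => ⟨Θ, h1.trans h, h2⟩)
    refine ⟨(φ.impl χ₁).and (φ.neg.impl χ₂), fun Γ => ?_⟩
    rw [Γ.2.and, Γ.2.impl, Γ.2.impl, Γ.2.neg, h₁, h₂]
    constructor
    · rintro ⟨h1, h2⟩
      by_cases hφ : φ ∈ Γ.1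
      · obtain ⟨Θ, ha, hb, hc⟩ := h1 hφ
        refine hP Θ Γ ?_ hc
        intro χ hχ
        rcases List.mem_cons.1 hχ with rfl | hχ
        · tauto
        · exact ha χ hχ
      · obtain ⟨Θ, ha, hb, hc⟩ := h2 hφ
        refine hP Θ Γ ?_ hc
        intro χ hχ
        rcases List.mem_cons.1 hχ with rfl | hχ
        · tauto
        · exact ha χ hχ
    · intro h
      exact ⟨fun hφ => ⟨Γ, Agree.refl _ _, hφ, h⟩, fun hφ => ⟨Γ, Agree.refl _ _, hφ, h⟩⟩

/-- Filtered relation. -/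
def Rf (L : List (Formula Ag)) (l : Lab Ag) (Γ Δ : MCS Ag) : Prop :=
  ∃ Γ' Δ', Agree L Γ Γ' ∧ Agree L Δ' Δ ∧ Rc l Γ' Δ'

theorem Rf_symm {L : List (Formula Ag)} {l : Lab Ag} {Γ Δ : MCS Ag} (h : Rf L l Γ Δ) :
    Rf L l Δ Γ := by
  obtain ⟨Γ', Δ', h1, h2, h3⟩ := h
  exact ⟨Δ', Γ', h2.symm, h1.symm, Rc_symm h3⟩

abbrev World (Ag : Type) := List (Lab Ag × MCS Ag)

def st (Γ₀ : MCS Ag) : World Ag → MCS Ag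
  | [] => Γ₀
  | x :: _ => x.2

def Eset (L : List (Formula Ag)) (Γ₀ : MCS Ag) (w w' : World Ag) : Set (Finset Ag) :=
  {T | ∃ l Γ, T ∈ Lab.fam l ∧ ((w' = (l, Γ) :: w ∧ Rf L l (st Γ₀ w) Γ) ∨
    (w = (l, Γ) :: w' ∧ Rf L l (st Γ₀ w') Γ))}

def model (L : List (Formula Ag)) (Γ₀ : MCS Ag) : SimModel Ag where
  W := World Ag
  A := Finset Ag
  w_nonempty := ⟨[]⟩
  E := Eset L Γ₀
  Cap := Cap
  val := fun w => {p | Formula.atom p ∈ (st Γ₀ w).1}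
  positivity := by
    intro s t h
    have : (∅ : Finset Ag) ∈ Eset L Γ₀ s t := by rw [h]; trivial
    obtain ⟨l, Γ, h1, -⟩ := this
    exact absurd h1 l.empty_notMem
  symmetry := by
    intro s t
    ext T
    constructor
    · rintro ⟨l, Γ, h1, h2⟩
      exact ⟨l, Γ, h1, h2.symm⟩
    · rintro ⟨l, Γ, h1, h2⟩
      exact ⟨l, Γ, h1, h2.symm⟩

theorem edge_elim {L : List (Formula Ag)} {Γ₀ : MCS Ag} {w w' : World Ag} {S : Set (Finset Ag)}
    (hS : S.Nonempty) (h : S ⊆ Eset L Γ₀ w w') :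
    ∃ l : Lab Ag, S ⊆ l.fam ∧ Rf L l (st Γ₀ w) (st Γ₀ w') := by
  obtain ⟨T, hT⟩ := hS
  obtain ⟨l, Γ, -, ⟨rfl, h2⟩ | ⟨rfl, h2⟩⟩ := h hT
  · refine ⟨l, ?_, h2⟩
    intro T' hT'
    obtain ⟨l', Γ', h3, ⟨h4, -⟩ | ⟨h4, -⟩⟩ := h hT'
    · simp only [List.cons.injEq, Prod.mk.injEq] at h4
      rw [h4.1.1]; exact h3
    · have := congrArg List.length h4
      simp at this
      omega
  · refine ⟨l, ?_, Rf_symm h2⟩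
    intro T' hT'
    obtain ⟨l', Γ', h3, ⟨h4, -⟩ | ⟨h4, -⟩⟩ := h hT'
    · have := congrArg List.length h4
      simp at this
      omega
    · simp only [List.cons.injEq, Prod.mk.injEq] at h4
      rw [h4.1.1]; exact h3

theorem edge_intro {L : List (Formula Ag)} {Γ₀ : MCS Ag} {w : World Ag} {l : Lab Ag} {Δ : MCS Ag}
    (h : Rf L l (st Γ₀ w) Δ) : l.fam ⊆ Eset L Γ₀ w ((l, Δ) :: w) :=
  fun _ hT => ⟨l, Δ, hT, Or.inl ⟨rfl, h⟩⟩

/-- Subformulas. -/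
def sub : Formula Ag → List (Formula Ag)
  | .atom p => [.atom p]
  | .neg φ => .neg φ :: sub φ
  | .impl φ ψ => .impl φ ψ :: (sub φ ++ sub ψ)
  | .K a φ => .K a φ :: sub φ
  | .C G h φ => .C G h φ :: sub φ
  | .D G h φ => .D G h φ :: sub φ
  | .F G h φ => .F G h φ :: sub φ

theorem self_sub (φ : Formula Ag) : φ ∈ sub φ := by
  cases φ <;> simp [sub]

theorem box_case {L : List (Formula Ag)} {Γ₀ : MCS Ag} {w w' : World Ag} {S : Set (Finset Ag)}
    (hS : S.Nonempty) (h : S ⊆ Eset L Γ₀ w w') {β ψ : Formula Ag} (hβ : β ∈ L) (hψ : ψ ∈ L)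
    (hin : ∀ (l : Lab Ag), S ⊆ l.fam → ∀ Γ : MCS Ag, β ∈ Γ.1 → l.box ψ ∈ Γ.1)
    (hw : β ∈ (st Γ₀ w).1) : ψ ∈ (st Γ₀ w').1 := by
  obtain ⟨l, hl, Γ, Δ, h1, h2, h3⟩ := edge_elim hS h
  exact (h2 ψ hψ).1 (h3 _ (hin l hl Γ ((h1 β hβ).1 hw)))

theorem truth (L : List (Formula Ag)) (Γ₀ : MCS Ag) (ψ : Formula Ag) (hsub : sub ψ ⊆ L) :
    ∀ w : World Ag, (model L Γ₀).sat w ψ ↔ ψ ∈ (st Γ₀ w).1 := by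
  have hself : ψ ∈ L := hsub (self_sub ψ)
  induction ψ with
  | atom p => intro w; exact Iff.rfl
  | neg φ ih =>
    intro w
    have ih := ih (fun x hx => hsub (by simp [sub, hx])) (hsub (by simp [sub, self_sub])) w
    rw [(st Γ₀ w).2.neg, ← ih]
    exact Iff.rfl
  | impl φ χ ih1 ih2 =>
    intro w
    have ih1 := ih1 (fun x hx => hsub (by simp [sub, hx])) (hsub (by simp [sub, self_sub])) w
    have ih2 := ih2 (fun x hx => hsub (by simp [sub, hx])) (hsub (by simp [sub, self_sub])) w
    rw [(st Γ₀ w).2.impl, ← ih1, ← ih2]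
    exact Iff.rfl
  | K a φ ih =>
    intro w
    have hφ : φ ∈ L := hsub (by simp [sub, self_sub])
    have ih := ih (fun x hx => hsub (by simp [sub, hx])) hφ
    constructor
    · intro h
      by_contra hn
      rw [← K_D] at hn
      obtain ⟨Δ, h1, h2⟩ := Rc_exists (l := Lab.D {a} (Finset.singleton_nonempty a)) hn
      apply h2
      refine (ih ((Lab.D {a} (Finset.singleton_nonempty a), Δ) :: w)).1 (h _ ?_)
      refine Set.Subset.trans ?_ (edge_intro ⟨_, _, Agree.refl _ _, Agree.refl _ _, h1⟩)
      intro T hT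
      exact ⟨a, by simp, hT⟩
    · intro h w' hw'
      exact (ih w').2 (box_case (S := Cap a) ⟨{a}, by simp [Cap]⟩ hw' hself hφ
        (fun l hl Γ hΓ => incl_K hl Γ hΓ) h)
  | D G hG φ ih =>
    intro w
    have hφ : φ ∈ L := hsub (by simp [sub, self_sub])
    have ih := ih (fun x hx => hsub (by simp [sub, hx])) hφ
    constructor
    · intro h
      by_contra hn
      obtain ⟨Δ, h1, h2⟩ := Rc_exists (l := Lab.D G hG) hn
      apply h2
      refine (ih ((Lab.D G hG, Δ) :: w)).1 (h _ ?_)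
      refine Set.Subset.trans ?_ (edge_intro ⟨_, _, Agree.refl _ _, Agree.refl _ _, h1⟩)
      intro T hT
      simp only [Set.mem_iUnion] at hT
      obtain ⟨a, ha, hT⟩ := hT
      exact ⟨a, ha, hT⟩
    · intro h w' hw'
      refine (ih w').2 (box_case (S := ⋃ a ∈ G, Cap a) ⟨G, ?_⟩ hw' hself hφ
        (fun l hl Γ hΓ => incl_D hG hl Γ hΓ) h)
      obtain ⟨a, ha⟩ := hG
      simp only [Set.mem_iUnion]
      exact ⟨a, ha, ha⟩
  | F G hG φ ih =>
    intro w
    have hφ : φ ∈ L := hsub (by simp [sub, self_sub])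
    have ih := ih (fun x hx => hsub (by simp [sub, hx])) hφ
    constructor
    · intro h
      by_contra hn
      obtain ⟨Δ, h1, h2⟩ := Rc_exists (l := Lab.F G hG) hn
      apply h2
      refine (ih ((Lab.F G hG, Δ) :: w)).1 (h _ ?_)
      refine Set.Subset.trans ?_ (edge_intro ⟨_, _, Agree.refl _ _, Agree.refl _ _, h1⟩)
      intro T hT
      simp only [Set.mem_iInter] at hT
      exact fun a ha => hT a ha
    · intro h w' hw'
      refine (ih w').2 (box_case (S := ⋂ a ∈ G, Cap a) ⟨G, ?_⟩ hw' hself hφ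
        (fun l hl Γ hΓ => incl_F hG hl Γ hΓ) h)
      simp [Cap]
  | C G hG φ ih =>
    intro w
    have hφ : φ ∈ L := hsub (by simp [sub, self_sub])
    have ih := ih (fun x hx => hsub (by simp [sub, hx])) hφ
    let step : World Ag → World Ag → Prop := fun u v => ∃ a ∈ G, Cap a ⊆ Eset L Γ₀ u v
    have hsat : (model L Γ₀).sat w (.C G hG φ) ↔
        ∀ t : World Ag, Relation.TransGen step w t → (model L Γ₀).sat t φ := Iff.rfl
    rw [hsat]
    constructor
    · intro h
      obtain ⟨χ, hχ⟩ := definable L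
        (fun Θ => ∃ w', Agree L (st Γ₀ w') Θ ∧ Relation.ReflTransGen step w w')
        (fun Γ Δ h ⟨w', h1, h2⟩ => ⟨w', h1.trans h, h2⟩)
      have hp : Prov (χ.impl (.C G hG φ)) := by
        apply Prov.c2
        apply prov_of_mcs
        intro Θ
        rw [Θ.2.impl, Θ.2.bigConj]
        intro hΘ a ha
        obtain ⟨w', h1, h2⟩ := (hχ Θ).1 hΘ
        by_contra hn
        rw [← K_D] at hn
        obtain ⟨Δ, h3, h4⟩ := Rc_exists (l := Lab.D {a} (Finset.singleton_nonempty a)) hn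
        apply h4
        have hst : step w' ((Lab.D {a} (Finset.singleton_nonempty a), Δ) :: w') := by
          refine ⟨a, ha, Set.Subset.trans ?_ (edge_intro ⟨Θ, _, h1, Agree.refl _ _, h3⟩)⟩
          intro T hT
          exact ⟨a, by simp, hT⟩
        rw [Δ.2.and]
        refine ⟨(hχ Δ).2 ⟨_, ?_, h2.tail hst⟩, ?_⟩
        · exact Agree.refl _ _
        · exact (ih _).1 (h _ (Relation.TransGen.tail' h2 hst))
      exact (st Γ₀ w).2.mp ((st Γ₀ w).2.prov hp)
        ((hχ _).2 ⟨w, Agree.refl _ _, Relation.ReflTransGen.refl⟩)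
    · intro h t ht
      have hstep : ∀ u v, step u v → Formula.C G hG φ ∈ (st Γ₀ u).1 →
          φ ∈ (st Γ₀ v).1 ∧ Formula.C G hG φ ∈ (st Γ₀ v).1 := by
        rintro u v ⟨a, ha, huv⟩ hu
        have hin : ∀ (l : Lab Ag), Cap a ⊆ l.fam → ∀ Γ : MCS Ag, Formula.C G hG φ ∈ Γ.1 →
            l.box (φ.and (.C G hG φ)) ∈ Γ.1 := by
          intro l hl Γ hΓ
          have h1 := Γ.2.mp (Γ.2.prov (Prov.c1 G hG)) hΓ
          rw [Γ.2.bigConj] at h1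
          exact incl_K hl Γ (h1 a ha)
        obtain ⟨l, hl, Γ, Δ, h1, h2, h3⟩ := edge_elim ⟨{a}, by simp [Cap]⟩ huv
        have h4 := h3 _ (hin l hl Γ ((h1 _ hself).1 hu))
        rw [Δ.2.and] at h4
        exact ⟨(h2 _ hφ).1 h4.1, (h2 _ hself).1 h4.2⟩
      have : φ ∈ (st Γ₀ t).1 ∧ Formula.C G hG φ ∈ (st Γ₀ t).1 := by
        induction ht with
        | single hs => exact hstep _ _ hs h
        | tail _ hs ih' => exact hstep _ _ hs ih'.2
      exact (ih t).2 this.1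

end ELCDF

/-- weak completeness of ELCDF: every ELCDF-formula valid on
similarity models is a theorem of the axiomatic system ELCDF. -/
theorem stmt_19 {Ag : Type} [Fintype Ag] [Nonempty Ag]
    (φ : Formula Ag) (h : ∀ (M : SimModel Ag) (s : M.W), M.sat s φ) :
    Prov φ := by
  by_contra hc
  obtain ⟨M, hM, -, hn⟩ := ELCDF.lindenbaum ELCDF.isTheory_prov hc
  exact hn ((ELCDF.truth (ELCDF.sub φ) ⟨M, hM⟩ φ (fun _ hx => hx) []).1 (h _ _))
end
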